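/- Uniqueness of seeds: if P ~ P' and both P and P' are seeds, then P ≡D P'. -/

import Mathlib

namespace CCS

/-- Process terms over a set of actions `A`. -/
inductive Proc (A : Type) where
  | nil : Proc A
  | pre : A → Proc A → Proc A
  | par : Proc A → Proc A → Proc A
  | repl : A → Proc A → Proc A

namespace Proc

/-- Finite processes: no occurrence of replication. -/
def IsFin {A : Type} : Proc A → Prop
  | nil => True
  | pre _ p => IsFin p
  | par p q => IsFin p ∧ IsFin q
  | repl _ _ => False

/-- Processes of the calculus: replication is applied only to prefixed
finite processes, at top level. -/
def Wf {A : Type} : Proc A → Prop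
  | nil => True
  | pre _ p => IsFin p
  | par p q => Wf p ∧ Wf q
  | repl _ p => IsFin p

/-- Size: the number of prefixes. -/
def size {A : Type} : Proc A → ℕ
  | nil => 0
  | pre _ p => size p + 1
  | par p q => size p + size q
  | repl _ p => size p + 1

/-- `reps n p` is the parallel composition of `n` copies of `p`. -/
def reps {A : Type} : ℕ → Proc A → Proc A
  | 0, _ => nil
  | n+1, p => par p (reps n p)

/-- `bang F` is `!F`: for `F = α₁.F₁ | ... | αk.Fk` it is `!α₁.F₁ | ... | !αk.Fk`. -/
def bang {A : Type} : Proc A → Proc A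
  | nil => nil
  | pre a p => repl a p
  | par p q => par (bang p) (bang q)
  | repl a p => repl a p

end Proc

/-- The labelled transition system (no synchronisation). -/
inductive Step {A : Type} : Proc A → A → Proc A → Prop where
  | pre {a : A} {p : Proc A} : Step (Proc.pre a p) a p
  | repl {a : A} {p : Proc A} :
      Step (Proc.repl a p) a (Proc.par (Proc.repl a p) p)
  | parL {p : Proc A} {a : A} {p' : Proc A} (q : Proc A) :
      Step p a p' → Step (Proc.par p q) a (Proc.par p' q)
  | parR {q : Proc A} {a : A} {q' : Proc A} (p : Proc A) :
      Step q a q' → Step (Proc.par p q) a (Proc.par p q')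

/-- Strong bisimulations. -/
def IsBisim {A : Type} (R : Proc A → Proc A → Prop) : Prop :=
  Symmetric R ∧
    ∀ p q, R p q → ∀ a p', Step p a p' → ∃ q', Step q a q' ∧ R p' q'

/-- Strong bisimilarity `~`: the greatest strong bisimulation. -/
def Bisim {A : Type} (p q : Proc A) : Prop :=
  ∃ R, IsBisim R ∧ R p q

/-- The congruence `≡D`: the smallest congruence generated by the abelian
monoid laws for parallel composition (neutral element `0`) and the
distribution law `α.(F | α.F | ... | α.F) = α.F | α.F | ... | α.F`
(with as many occurrences of `F` on both sides). -/
inductive EqD {A : Type} : Proc A → Proc A → Prop where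
  | refl (p : Proc A) : EqD p p
  | symm {p q : Proc A} : EqD p q → EqD q p
  | trans {p q r : Proc A} : EqD p q → EqD q r → EqD p r
  | parComm (p q : Proc A) : EqD (Proc.par p q) (Proc.par q p)
  | parAssoc (p q r : Proc A) :
      EqD (Proc.par (Proc.par p q) r) (Proc.par p (Proc.par q r))
  | parNil (p : Proc A) : EqD (Proc.par p Proc.nil) p
  | distr (a : A) (F : Proc A) (n : ℕ) (hF : F.IsFin) :
      EqD (Proc.pre a (Proc.par F (Proc.reps n (Proc.pre a F))))
          (Proc.reps (n + 1) (Proc.pre a F))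
  | congPre (a : A) {p q : Proc A} : EqD p q → EqD (Proc.pre a p) (Proc.pre a q)
  | congPar {p p' q q' : Proc A} :
      EqD p p' → EqD q q' → EqD (Proc.par p q) (Proc.par p' q')
  | congRepl (a : A) {p q : Proc A} : EqD p q → EqD (Proc.repl a p) (Proc.repl a q)

/-- Finite (single-hole) contexts `D ::= [] | α.D | D|F`. -/
inductive FCtx (A : Type) where
  | hole : FCtx A
  | pre : A → FCtx A → FCtx A
  | par : FCtx A → Proc A → FCtx A

/-- Filling the hole of a finite context. -/
def FCtx.fill {A : Type} : FCtx A → Proc A → Proc A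
  | .hole, p => p
  | .pre a d, p => Proc.pre a (d.fill p)
  | .par d f, p => Proc.par (d.fill p) f

/-- Well-formedness of a finite context: the processes placed in parallel
are finite. -/
def FCtx.Wf {A : Type} : FCtx A → Prop
  | .hole => True
  | .pre _ d => d.Wf
  | .par d f => d.Wf ∧ f.IsFin

/-- Single-hole contexts `C ::= D | !α.D | C|P` (the hole never occurs
directly under a replication). -/
inductive Ctx (A : Type) where
  | ofD : FCtx A → Ctx A
  | repl : A → FCtx A → Ctx A
  | par : Ctx A → Proc A → Ctx A

/-- Filling the hole of a context. -/
def Ctx.fill {A : Type} : Ctx A → Proc A → Proc A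
  | .ofD d, p => d.fill p
  | .repl a d, p => Proc.repl a (d.fill p)
  | .par c q, p => Proc.par (c.fill p) q

/-- Well-formedness of a context. -/
def Ctx.Wf {A : Type} : Ctx A → Prop
  | .ofD d => d.Wf
  | .repl _ d => d.Wf
  | .par c p => c.Wf ∧ p.Wf

/-- `k` consecutive transitions. -/
inductive NSteps {A : Type} : Proc A → ℕ → Proc A → Prop where
  | zero (p : Proc A) : NSteps p 0 p
  | succ {p : Proc A} {a : A} {p' : Proc A} {k : ℕ} {q : Proc A} :
      Step p a p' → NSteps p' k q → NSteps p (k + 1) q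

/-- `P ⇒k Q`: `k` transitions from `P` reach a process `≡D Q`. -/
def Reduct {A : Type} (p : Proc A) (k : ℕ) (q : Proc A) : Prop :=
  ∃ p', NSteps p k p' ∧ EqD p' q

/-- `TopRepl S a G` holds when `!a.G` is one of the (top-level) replicated
parallel components of `S`. -/
inductive TopRepl {A : Type} : Proc A → A → Proc A → Prop where
  | repl (a : A) (p : Proc A) : TopRepl (Proc.repl a p) a p
  | parL {p : Proc A} {a : A} {r : Proc A} (q : Proc A) :
      TopRepl p a r → TopRepl (Proc.par p q) a r
  | parR {q : Proc A} {a : A} {r : Proc A} (p : Proc A) :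
      TopRepl q a r → TopRepl (Proc.par p q) a r

/-- `S` has only replicated components: `S = ∏i !αi.Si`. -/
def ReplOnly {A : Type} : Proc A → Prop
  | .nil => True
  | .pre _ _ => False
  | .par p q => ReplOnly p ∧ ReplOnly q
  | .repl _ p => p.IsFin

/-- `S ⫫ F` : for no component `!αi.Si` of `S` and no `k` do we have
`F ⇒k αi.Si`. -/
def Dis {A : Type} (S F : Proc A) : Prop :=
  ∀ a G, TopRepl S a G → ∀ k, ¬ Reduct F k (Proc.pre a G)

/-- `S ▷ R` : there is `k > 0` with `S ⇒k S | R`. -/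
def Purg {A : Type} (S R : Proc A) : Prop :=
  ∃ k, 0 < k ∧ Reduct S k (Proc.par S R)

/-- A process is a seed if no (well-formed) process of strictly smaller
size is bisimilar to it. -/
def IsSeed {A : Type} (p : Proc A) : Prop :=
  p.Wf ∧ ∀ q : Proc A, q.Wf → Bisim q p → p.size ≤ q.size

/-- The rewriting relation `⤳_T` (first argument), defined modulo `≡D` by
the axioms (B1) `C[α.F] ⤳_{!α.F|F'} C[0]` and (B2) `!α.F | !α.F | P ⤳_Q !α.F | P`. -/
inductive Rw {A : Type} : Proc A → Proc A → Proc A → Prop where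
  | B1 {a : A} {F F' : Proc A} (C : Ctx A) :
      F.IsFin → F'.Wf → C.Wf →
      Rw (Proc.par (Proc.repl a F) F') (C.fill (Proc.pre a F)) (C.fill Proc.nil)
  | B2 {a : A} {F P Q : Proc A} :
      F.IsFin → P.Wf → Q.Wf →
      Rw Q (Proc.par (Proc.repl a F) (Proc.par (Proc.repl a F) P))
           (Proc.par (Proc.repl a F) P)
  | eqD {T T' P P' Q Q' : Proc A} :
      EqD T T' → EqD P P' → Rw T' P' Q' → EqD Q Q' → Rw T P Q

/-- `⤳*_T` : the reflexive transitive closure of `⤳_T`. -/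
def RwStar {A : Type} (T : Proc A) : Proc A → Proc A → Prop :=
  Relation.ReflTransGen (Rw T)

/-- Convertibility `P ⋈ Q`: some process `T` satisfies `P ⤳*_T T` and `Q ⤳*_T T`. -/
def Convert {A : Type} (P Q : Proc A) : Prop :=
  ∃ T : Proc A, T.Wf ∧ RwStar T P T ∧ RwStar T Q T

/-- `∏i αi.Fi` for a list of prefixed components. -/
def prodPre {A : Type} (l : List (A × Proc A)) : Proc A :=
  (l.map fun x => Proc.pre x.1 x.2).foldr Proc.par Proc.nil

/-- `∏i !αi.Fi` for a list of prefixed components. -/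
def bangProd {A : Type} (l : List (A × Proc A)) : Proc A :=
  (l.map fun x => Proc.repl x.1 x.2).foldr Proc.par Proc.nil

end CCS

/-!
Bisimilarity classes form a commutative monoid under parallel composition. On the classes of finite
processes, size is a grading which every transition lowers by one, and this forces unique
decomposition into primes. As `a.F` has a single derivative, it is a multiple of one prime `a.G`;
this is an instance of the distribution law, so `≡D` coincides with bisimilarity on finite
processes.

Write a seed as `F | S`, where `F` is finite and `S` is a product of replicated processes `!a.G`.
A class has finitely many derivatives under each action, so two classes that are summands of each
other are equal; consequently bisimilar processes have bisimilar replicated parts. By minimality no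
prefix inside `F` or the bodies `G` is absorbed by `S`. A step of `F` can then never be simulated by
`S`, so `S` can be cancelled: both `F` and the bodies `G` are determined up to bisimilarity, hence
up to `≡D`, and minimality excludes repetitions among the `!a.G`.
-/

namespace CCS

/-! ### Unique decomposition in graded monoids with transitions -/

section UniqueDecomposition

variable {M : Type*} [AddCommMonoid M] {w : M →+ ℕ} {T : M → M → Prop} {s t : Multiset M}
  {p x y z : M}

/-- A transition relation `T` on a commutative monoid graded by the weight `w`, in which summands
move independently and every transition lowers the weight by one. The instance of interest is
finite processes up to bisimilarity, added by parallel composition and weighed by their size. -/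
structure IsGradedStep (w : M →+ ℕ) (T : M → M → Prop) : Prop where
  eq_zero_of_weight_eq_zero {x : M} : w x = 0 → x = 0
  weight_of_step {x y : M} : T x y → w x = w y + 1
  step_add_iff {x y z : M} :
    T (x + y) z ↔ (∃ x', T x x' ∧ z = x' + y) ∨ ∃ y', T y y' ∧ z = x + y'
  exists_step {x : M} : x ≠ 0 → ∃ y, T x y

namespace IsGradedStep

theorem weight_pos (h : IsGradedStep w T) (hx : x ≠ 0) : 0 < w x :=
  Nat.pos_of_ne_zero fun hw => hx (h.eq_zero_of_weight_eq_zero hw)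

theorem subsingleton_addUnits (h : IsGradedStep w T) : Subsingleton (AddUnits M) := by
  refine subsingleton_of_forall_eq 0 fun u => AddUnits.ext (h.eq_zero_of_weight_eq_zero ?_)
  exact (isAddUnit_iff_eq_zero (M := ℕ)).1 (u.isAddUnit.map w)

theorem exists_addIrreducible_multiset (h : IsGradedStep w T) (x : M) :
    ∃ s : Multiset M, (∀ p ∈ s, AddIrreducible p) ∧ s.sum = x := by
  induction hn : w x using Nat.strong_induction_on generalizing x with
  | _ n ih =>
    by_cases hx : x = 0
    · exact ⟨0, by simp, by simp [hx]⟩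
    have := h.subsingleton_addUnits
    obtain hirr | ⟨y, z, hy, hz, rfl⟩ := addIrreducible_or_factor (isAddUnit_iff_eq_zero.not.2 hx)
    · exact ⟨{x}, by simpa using hirr, by simp⟩
    have hy_pos := h.weight_pos (isAddUnit_iff_eq_zero.not.1 hy)
    have hz_pos := h.weight_pos (isAddUnit_iff_eq_zero.not.1 hz)
    rw [map_add] at hn
    obtain ⟨s, hs, rfl⟩ := ih (w y) (by lia) y rfl
    obtain ⟨t, ht, rfl⟩ := ih (w z) (by lia) z rfl
    exact ⟨s + t, fun p hp => (Multiset.mem_add.1 hp).elim (hs p) (ht p), Multiset.sum_add s t⟩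

/-- A decomposition of `x` into irreducible summands. Before `eq_of_sum_eq_sum` shows that it is
the only one, it is an arbitrary choice. -/
noncomputable def factors (h : IsGradedStep w T) (x : M) : Multiset M :=
  (h.exists_addIrreducible_multiset x).choose

theorem addIrreducible_of_mem_factors (h : IsGradedStep w T) (hp : p ∈ h.factors x) :
    AddIrreducible p :=
  (h.exists_addIrreducible_multiset x).choose_spec.1 p hp

theorem sum_factors (h : IsGradedStep w T) (x : M) : (h.factors x).sum = x :=
  (h.exists_addIrreducible_multiset x).choose_spec.2

theorem weight_le_weight_sum (w : M →+ ℕ) (hp : p ∈ s) : w p ≤ w s.sum := by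
  obtain ⟨t, rfl⟩ := Multiset.exists_cons_of_mem hp
  rw [Multiset.sum_cons, map_add]
  exact Nat.le_add_right _ _

theorem card_le_weight_sum (h : IsGradedStep w T) (hs : ∀ p ∈ s, AddIrreducible p) :
    s.card ≤ w s.sum := by
  induction s using Multiset.induction with
  | empty => simp
  | cons p s ih =>
    obtain ⟨hp, hs⟩ := Multiset.forall_mem_cons.1 hs
    have hp_pos := h.weight_pos hp.ne_zero
    have hcard := ih hs
    rw [Multiset.card_cons, Multiset.sum_cons, map_add]
    lia

theorem exists_cons_of_step_sum (h : IsGradedStep w T) (hz : T s.sum z) :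
    ∃ r t r', s = r ::ₘ t ∧ T r r' ∧ z = r' + t.sum := by
  induction s using Multiset.induction generalizing z with
  | empty => simpa using h.weight_of_step hz
  | cons a s ih =>
    rw [Multiset.sum_cons] at hz
    rcases h.step_add_iff.1 hz with ⟨a', ha, rfl⟩ | ⟨z', hz', rfl⟩
    · exact ⟨a, s, a', rfl, ha, rfl⟩
    · obtain ⟨r, t, r', rfl, hr, rfl⟩ := ih hz'
      refine ⟨r, a ::ₘ t, r', Multiset.cons_swap a r t, hr, ?_⟩
      rw [Multiset.sum_cons, add_left_comm]

theorem step_sum_cons (h : IsGradedStep w T) {q q' : M} (hq : T q q') (u : Multiset M) :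
    T (q ::ₘ u).sum (q' + u.sum) := by
  rw [Multiset.sum_cons]
  exact h.step_add_iff.2 (Or.inl ⟨q', hq, rfl⟩)

theorem count_factors_eq_zero [DecidableEq M] (h : IsGradedStep w T) (hx : w x < w p) :
    (h.factors x).count p = 0 := by
  refine Multiset.count_eq_zero.2 fun hp => ?_
  have hle := weight_le_weight_sum w hp
  rw [h.sum_factors] at hle
  lia

/-- Decompositions into irreducible summands are unique in weight less than `n`: the induction
hypothesis of unique decomposition. -/
def UniqueBelow (w : M →+ ℕ) (n : ℕ) : Prop :=
  ∀ s t : Multiset M, (∀ p ∈ s, AddIrreducible p) → (∀ p ∈ t, AddIrreducible p) →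
    s.sum = t.sum → w s.sum < n → s = t

theorem exists_matching_step (h : IsGradedStep w T) {q q' : M} {u v : Multiset M}
    (huniq : UniqueBelow w (w v.sum)) (hu : ∀ p ∈ u, AddIrreducible p)
    (hv : ∀ p ∈ v, AddIrreducible p) (huv : (q ::ₘ u).sum = v.sum) (hq : T q q') :
    ∃ r t r', v = r ::ₘ t ∧ T r r' ∧ h.factors q' + u = h.factors r' + t := by
  have hstep : T v.sum (q' + u.sum) := huv ▸ h.step_sum_cons hq u
  obtain ⟨r, t, r', rfl, hr, heq⟩ := h.exists_cons_of_step_sum hstep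
  refine ⟨r, t, r', rfl, hr, huniq _ _ ?_ ?_ ?_ ?_⟩
  · exact fun p hp =>
      (Multiset.mem_add.1 hp).elim h.addIrreducible_of_mem_factors (hu p)
  · exact fun p hp => (Multiset.mem_add.1 hp).elim h.addIrreducible_of_mem_factors
      fun hp => hv p (Multiset.mem_cons_of_mem hp)
  · rw [Multiset.sum_add, Multiset.sum_add, h.sum_factors, h.sum_factors, heq]
  · rw [Multiset.sum_add, h.sum_factors, h.weight_of_step hstep]
    exact Nat.lt_succ_self _

section Count

variable [DecidableEq M]

theorem count_le_count_or_exists_count_factors_lt (h : IsGradedStep w T) {q q' : M}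
    (huniq : UniqueBelow w (w t.sum)) (hs : ∀ q ∈ s, AddIrreducible q)
    (ht : ∀ q ∈ t, AddIrreducible q) (hst : s.sum = t.sum)
    (hheavy : ∀ r, w p < w r → s.count r = t.count r) (hq : q ∈ s) (hqp : q ≠ p)
    (hqq' : T q q') :
    s.count p ≤ t.count p ∨ ∃ r ∈ s, r ≠ p ∧ ∃ r', T r r' ∧
      (h.factors q').count p < (h.factors r').count p := by
  refine or_iff_not_imp_left.2 fun hlt => ?_
  obtain ⟨u, rfl⟩ := Multiset.exists_cons_of_mem hq
  obtain ⟨r, v, r', rfl, hrr', heq⟩ :=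
    h.exists_matching_step huniq (Multiset.forall_mem_cons.1 hs).2 ht hst hqq'
  have hcount := congrArg (Multiset.count p) heq
  rw [Multiset.count_add, Multiset.count_add] at hcount
  rw [Multiset.count_cons_of_ne hqp.symm] at hlt
  have hv_le := Multiset.count_le_count_cons p r v
  have hgt : (h.factors q').count p < (h.factors r').count p := by lia
  have hr_heavy : w p < w r := by
    by_contra! hle
    have hzero := h.count_factors_eq_zero (x := r') (p := p)
      (by rw [h.weight_of_step hrr'] at hle; lia)
    lia
  have hr_mem : r ∈ q ::ₘ u := by
    rw [← Multiset.count_pos, hheavy r hr_heavy]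
    exact Multiset.count_pos.2 (Multiset.mem_cons_self r v)
  exact ⟨r, hr_mem, fun hrp => by simp [hrp] at hr_heavy, r', hrr', hgt⟩

theorem count_le_count_of_exists_ne (h : IsGradedStep w T) (huniq : UniqueBelow w (w t.sum))
    (hs : ∀ q ∈ s, AddIrreducible q) (ht : ∀ q ∈ t, AddIrreducible q) (hst : s.sum = t.sum)
    (hheavy : ∀ r, w p < w r → s.count r = t.count r) (hne : ∃ q ∈ s, q ≠ p) :
    s.count p ≤ t.count p := by
  by_contra hlt
  -- Otherwise the previous lemma yields steps of elements of `s` producing ever more copies of `p`.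
  have unbounded : ∀ k, ∃ q ∈ s, q ≠ p ∧ ∃ q', T q q' ∧ k ≤ (h.factors q').count p := by
    intro k
    induction k with
    | zero =>
      obtain ⟨q, hq, hqp⟩ := hne
      obtain ⟨q', hqq'⟩ := h.exists_step (hs q hq).ne_zero
      exact ⟨q, hq, hqp, q', hqq', Nat.zero_le _⟩
    | succ k ih =>
      obtain ⟨q, hq, hqp, q', hqq', hk⟩ := ih
      obtain ⟨r, hr, hrp, r', hrr', hgt⟩ := (h.count_le_count_or_exists_count_factors_lt
        huniq hs ht hst hheavy hq hqp hqq').resolve_left hlt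
      exact ⟨r, hr, hrp, r', hrr', by lia⟩
  obtain ⟨q, hq, -, q', hqq', hk⟩ := unbounded (w s.sum)
  have hcount := (Multiset.count_le_card p _).trans
    (h.card_le_weight_sum fun _ => h.addIrreducible_of_mem_factors (x := q'))
  rw [h.sum_factors] at hcount
  have hq_le := weight_le_weight_sum w hq
  rw [h.weight_of_step hqq'] at hq_le
  lia

theorem count_add_one_eq_count_of_forall_eq (h : IsGradedStep w T)
    {r : M} {v : Multiset M} (huniq : UniqueBelow w (w s.sum))
    (hs : ∀ q ∈ s, AddIrreducible q) (ht : ∀ q ∈ r ::ₘ v, AddIrreducible q)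
    (hst : s.sum = (r ::ₘ v).sum) (hle : w r ≤ w p) (hall : ∀ q ∈ s, q = p) :
    v.count p + 1 = s.count p := by
  obtain ⟨hr, hv⟩ := Multiset.forall_mem_cons.1 ht
  obtain ⟨r', hrr'⟩ := h.exists_step hr.ne_zero
  obtain ⟨q, u, q', rfl, hqq', heq⟩ := h.exists_matching_step huniq hv hs hst.symm hrr'
  obtain rfl : q = p := hall q (Multiset.mem_cons_self q u)
  have hcount := congrArg (Multiset.count q) heq
  rw [h.weight_of_step hrr'] at hle
  rw [Multiset.count_add, Multiset.count_add, h.count_factors_eq_zero (by lia),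
    h.count_factors_eq_zero (by rw [h.weight_of_step hqq']; lia), zero_add, zero_add] at hcount
  rw [hcount, Multiset.count_cons_self]

theorem count_le_count_of_forall_eq (h : IsGradedStep w T) (huniq : UniqueBelow w (w s.sum))
    (hs : ∀ q ∈ s, AddIrreducible q) (ht : ∀ q ∈ t, AddIrreducible q) (hst : s.sum = t.sum)
    (hheavy : ∀ r, w p < w r → s.count r = t.count r) (hall : ∀ q ∈ s, q = p) :
    s.count p ≤ t.count p := by
  have hle : ∀ r ∈ t, w r ≤ w p := by
    intro r hr
    by_contra! hlt
    have hrs : r ∈ s := by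
      rw [← Multiset.count_pos, hheavy r hlt]
      exact Multiset.count_pos.2 hr
    simp [hall r hrs] at hlt
  by_cases hpt : p ∈ t
  · obtain ⟨v, rfl⟩ := Multiset.exists_cons_of_mem hpt
    rw [Multiset.count_cons_self]
    exact (h.count_add_one_eq_count_of_forall_eq huniq hs ht hst le_rfl hall).ge
  by_cases hps : p ∈ s
  swap
  · simp [Multiset.count_eq_zero.2 hps]
  have hp := hs p hps
  have ht_ne : t ≠ 0 := by
    rintro rfl
    have hp_le := weight_le_weight_sum w hps
    rw [hst, Multiset.sum_zero, map_zero] at hp_le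
    have hp_pos := h.weight_pos hp.ne_zero
    lia
  obtain ⟨r, hr⟩ := Multiset.exists_mem_of_ne_zero ht_ne
  obtain ⟨v, rfl⟩ := Multiset.exists_cons_of_mem hr
  have hcount := h.count_add_one_eq_count_of_forall_eq huniq hs ht hst (hle r hr) hall
  rw [Multiset.count_eq_zero.2 fun hpv => hpt (Multiset.mem_cons_of_mem hpv), zero_add,
    Multiset.count_eq_card.2 fun q hq => (hall q hq).symm] at hcount
  obtain ⟨q, rfl⟩ := Multiset.card_eq_one.1 hcount.symm
  obtain rfl : p = q := Multiset.mem_singleton.1 hps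
  rw [Multiset.sum_singleton, Multiset.sum_cons] at hst
  have := h.subsingleton_addUnits
  rcases (hst ▸ hp).eq_zero_or_eq_zero with hr0 | hv0
  · exact absurd hr0 (ht r hr).ne_zero
  · rw [hv0, add_zero] at hst
    exact absurd (hst ▸ hr) hpt

theorem count_le_count (h : IsGradedStep w T) (huniq : UniqueBelow w (w s.sum))
    (hs : ∀ q ∈ s, AddIrreducible q) (ht : ∀ q ∈ t, AddIrreducible q) (hst : s.sum = t.sum)
    (hheavy : ∀ r, w p < w r → s.count r = t.count r) : s.count p ≤ t.count p := by
  by_cases hne : ∃ q ∈ s, q ≠ p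
  · exact h.count_le_count_of_exists_ne (hst ▸ huniq) hs ht hst hheavy hne
  · push Not at hne
    exact h.count_le_count_of_forall_eq huniq hs ht hst hheavy hne

end Count

theorem eq_of_uniqueBelow (h : IsGradedStep w T) (huniq : UniqueBelow w (w s.sum))
    (hs : ∀ q ∈ s, AddIrreducible q) (ht : ∀ q ∈ t, AddIrreducible q) (hst : s.sum = t.sum) :
    s = t := by
  classical
  have count_eq : ∀ k p, w s.sum < w p + k → s.count p = t.count p := by
    intro k
    induction k with
    | zero =>
      intro p hp
      rw [Multiset.count_eq_zero.2 fun hps => (weight_le_weight_sum w hps).not_gt hp,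
        Multiset.count_eq_zero.2 fun hpt => (weight_le_weight_sum w hpt).not_gt (hst ▸ hp)]
    | succ k ih =>
      intro p hp
      have hheavy : ∀ r, w p < w r → s.count r = t.count r := fun r hr => ih r (by lia)
      exact le_antisymm (h.count_le_count huniq hs ht hst hheavy)
        (h.count_le_count (hst ▸ huniq) ht hs hst.symm fun r hr => (hheavy r hr).symm)
  exact Multiset.ext.2 fun p => count_eq (w s.sum + 1) p (by lia)

theorem eq_of_sum_eq_sum (h : IsGradedStep w T) (hs : ∀ q ∈ s, AddIrreducible q)
    (ht : ∀ q ∈ t, AddIrreducible q) (hst : s.sum = t.sum) : s = t := by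
  induction hn : w s.sum using Nat.strong_induction_on generalizing s t with
  | _ n ih =>
    subst hn
    exact h.eq_of_uniqueBelow (fun s' t' hs' ht' hst' hlt => ih _ hlt hs' ht' hst' rfl) hs ht hst

theorem add_right_cancel (h : IsGradedStep w T) (hxy : x + z = y + z) : x = y := by
  have hmem : ∀ x, ∀ q ∈ h.factors x + h.factors z, AddIrreducible q := fun x q hq =>
    (Multiset.mem_add.1 hq).elim h.addIrreducible_of_mem_factors h.addIrreducible_of_mem_factors
  have hfactors : h.factors x = h.factors y := by
    refine Multiset.add_left_inj.1 (h.eq_of_sum_eq_sum (hmem x) (hmem y) ?_)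
    simpa only [Multiset.sum_add, h.sum_factors] using hxy
  rw [← h.sum_factors x, hfactors, h.sum_factors]

theorem eq_of_mem_factors_of_unique_step (h : IsGradedStep w T) {q : M}
    (hstep : ∀ y z, T x y → T x z → y = z) (hp : p ∈ h.factors x) (hq : q ∈ h.factors x) :
    p = q := by
  classical
  by_contra hpq
  obtain ⟨u, hu⟩ := Multiset.exists_cons_of_mem hp
  rw [hu, Multiset.mem_cons, or_iff_right (Ne.symm hpq)] at hq
  obtain ⟨v, rfl⟩ := Multiset.exists_cons_of_mem hq
  have hirr : ∀ r ∈ p ::ₘ q ::ₘ v, AddIrreducible r :=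
    fun r hr => h.addIrreducible_of_mem_factors (hu ▸ hr)
  have hx : (p ::ₘ q ::ₘ v).sum = x := hu ▸ h.sum_factors x
  obtain ⟨p', hpp'⟩ := h.exists_step (hirr p (by simp)).ne_zero
  obtain ⟨q', hqq'⟩ := h.exists_step (hirr q (by simp)).ne_zero
  have hsum : p' + (q ::ₘ v).sum = q' + (p ::ₘ v).sum :=
    hstep _ _ (hx ▸ h.step_sum_cons hpp' _)
      (hx ▸ Multiset.cons_swap p q v ▸ h.step_sum_cons hqq' _)
  have hfactors : h.factors p' + q ::ₘ v = h.factors q' + p ::ₘ v := by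
    refine h.eq_of_sum_eq_sum ?_ ?_ (by rwa [Multiset.sum_add, Multiset.sum_add, h.sum_factors,
      h.sum_factors]) <;>
    · intro r hr
      rcases Multiset.mem_add.1 hr with hr | hr
      · exact h.addIrreducible_of_mem_factors hr
      · exact hirr r (by simp only [Multiset.mem_cons] at hr ⊢; tauto)
  have hcount := congrArg (Multiset.count p) hfactors
  rw [Multiset.count_add, Multiset.count_add, Multiset.count_cons_self,
    Multiset.count_cons_of_ne hpq, h.count_factors_eq_zero (by rw [h.weight_of_step hpp']; lia)]
    at hcount
  lia

theorem exists_addIrreducible_eq_nsmul (h : IsGradedStep w T) (hx : x ≠ 0)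
    (hstep : ∀ y z, T x y → T x z → y = z) :
    ∃ p, AddIrreducible p ∧ ∃ k : ℕ, x = (k + 1) • p := by
  have hne : h.factors x ≠ 0 := fun h0 => hx (by rw [← h.sum_factors x, h0, Multiset.sum_zero])
  obtain ⟨p, hp⟩ := Multiset.exists_mem_of_ne_zero hne
  obtain ⟨u, hu⟩ := Multiset.exists_cons_of_mem hp
  refine ⟨p, h.addIrreducible_of_mem_factors hp, u.card, ?_⟩
  have hfactors := Multiset.eq_replicate_card.2 fun q hq =>
    h.eq_of_mem_factors_of_unique_step hstep hq hp
  rw [← h.sum_factors x, hfactors, Multiset.sum_replicate, hu, Multiset.card_cons]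

end IsGradedStep
end UniqueDecomposition

open Proc

variable {A : Type} {a b : A} {p q r p' q' : Proc A}

/-! ### Classes of processes under parallel composition -/

/-- An equivalence on processes which makes parallel composition a commutative monoid operation on
the classes, with neutral element `nil`. Both bisimilarity and `≡D` are of this kind. -/
structure ParCon (A : Type) extends Setoid (Proc A) where
  par {p p' q q' : Proc A} : r p p' → r q q' → r (p.par q) (p'.par q')
  par_comm (p q : Proc A) : r (p.par q) (q.par p)
  par_assoc (p q s : Proc A) : r ((p.par q).par s) (p.par (q.par s))
  par_nil (p : Proc A) : r (p.par nil) p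

namespace ParCon

variable {c : ParCon A}

/-- The type of classes of processes, with parallel composition as addition. -/
def Class (c : ParCon A) : Type := Quotient c.toSetoid

/-- The class of a process. -/
def classOf (c : ParCon A) (p : Proc A) : c.Class := Quotient.mk _ p

theorem classOf_eq_iff : c.classOf p = c.classOf q ↔ c.r p q :=
  Quotient.eq

theorem classOf_surjective : Function.Surjective c.classOf :=
  Quotient.mk_surjective

instance : Zero c.Class := ⟨c.classOf nil⟩

instance : Add c.Class := ⟨Quotient.map₂ Proc.par fun _ _ hp _ _ hq => c.par hp hq⟩

instance : AddCommMonoid c.Class where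
  nsmul := nsmulRec
  add_assoc := by
    rintro ⟨p⟩ ⟨q⟩ ⟨r⟩
    exact classOf_eq_iff.2 (c.par_assoc p q r)
  add_comm := by
    rintro ⟨p⟩ ⟨q⟩
    exact classOf_eq_iff.2 (c.par_comm p q)
  zero_add := by
    rintro ⟨p⟩
    exact classOf_eq_iff.2 (c.trans (c.par_comm nil p) (c.par_nil p))
  add_zero := by
    rintro ⟨p⟩
    exact classOf_eq_iff.2 (c.par_nil p)

theorem classOf_nil : c.classOf nil = 0 := rfl

theorem classOf_par (p q : Proc A) : c.classOf (p.par q) = c.classOf p + c.classOf q := rfl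

theorem classOf_reps (n : ℕ) (p : Proc A) : c.classOf (reps n p) = n • c.classOf p := by
  induction n with
  | zero => rw [zero_nsmul, reps, classOf_nil]
  | succ n ih => rw [reps, classOf_par, ih, succ_nsmul']

theorem classOf_eq_zero_of_size_eq_zero (hp : p.size = 0) : c.classOf p = 0 := by
  induction p with
  | nil => exact classOf_nil
  | pre a p => exact absurd hp (Nat.succ_ne_zero _)
  | par p q ihp ihq =>
    obtain ⟨hp, hq⟩ := Nat.add_eq_zero_iff.1 hp
    rw [classOf_par, ihp hp, ihq hq, add_zero]
  | repl a p => exact absurd hp (Nat.succ_ne_zero _)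

end ParCon

/-- The congruence `≡D` as a `ParCon`. -/
def eqDCon : ParCon A where
  r := EqD
  iseqv := ⟨EqD.refl, EqD.symm, EqD.trans⟩
  par := EqD.congPar
  par_comm := EqD.parComm
  par_assoc := EqD.parAssoc
  par_nil := EqD.parNil

theorem classOf_eq_iff_eqD : eqDCon.classOf p = eqDCon.classOf q ↔ EqD p q :=
  ParCon.classOf_eq_iff

/-! ### Bisimilarity classes -/

theorem step_par_iff :
    Step (p.par q) a r ↔
      (∃ p', Step p a p' ∧ r = p'.par q) ∨ ∃ q', Step q a q' ∧ r = p.par q' := by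
  constructor
  · rintro (_ | _ | ⟨_, hp⟩ | ⟨_, hq⟩)
    · exact Or.inl ⟨_, hp, rfl⟩
    · exact Or.inr ⟨_, hq, rfl⟩
  · rintro (⟨p', hp, rfl⟩ | ⟨q', hq, rfl⟩)
    · exact Step.parL q hp
    · exact Step.parR p hq

namespace Bisim

theorem exists_step (h : Bisim p q) (hp : Step p a p') : ∃ q', Step q a q' ∧ Bisim p' q' := by
  obtain ⟨R, hR, hpq⟩ := h
  obtain ⟨q', hq, hpq'⟩ := hR.2 p q hpq a p' hp
  exact ⟨q', hq, R, hR, hpq'⟩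

theorem refl (p : Proc A) : Bisim p p :=
  ⟨Eq, ⟨fun _ _ h => h.symm, by rintro p _ rfl a p' hp; exact ⟨p', hp, rfl⟩⟩, rfl⟩

theorem symm (h : Bisim p q) : Bisim q p :=
  let ⟨R, hR, hpq⟩ := h
  ⟨R, hR, hR.1 hpq⟩

theorem trans (hpq : Bisim p q) (hqr : Bisim q r) : Bisim p r := by
  refine ⟨fun p r => ∃ q, Bisim p q ∧ Bisim q r, ⟨?_, ?_⟩, q, hpq, hqr⟩
  · rintro p r ⟨q, hpq, hqr⟩
    exact ⟨q, hqr.symm, hpq.symm⟩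
  · rintro p r ⟨q, hpq, hqr⟩ a p' hp
    obtain ⟨q', hq, hpq'⟩ := hpq.exists_step hp
    obtain ⟨r', hr, hqr'⟩ := hqr.exists_step hq
    exact ⟨r', hr, q', hpq', hqr'⟩

theorem of_simulations {R : Proc A → Proc A → Prop}
    (hleft : ∀ p q, R p q → ∀ a p', Step p a p' → ∃ q', Step q a q' ∧ R p' q')
    (hright : ∀ p q, R p q → ∀ a q', Step q a q' → ∃ p', Step p a p' ∧ R p' q')
    (h : R p q) : Bisim p q := by
  refine ⟨fun p q => R p q ∨ R q p, ⟨fun p q => Or.symm, ?_⟩, Or.inl h⟩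
  rintro p q (hpq | hqp) a p' hp
  · obtain ⟨q', hq, hpq'⟩ := hleft p q hpq a p' hp
    exact ⟨q', hq, Or.inl hpq'⟩
  · obtain ⟨q', hq, hqp'⟩ := hright q p hqp a p' hp
    exact ⟨q', hq, Or.inr hqp'⟩

theorem par (hp : Bisim p p') (hq : Bisim q q') : Bisim (p.par q) (p'.par q') := by
  refine ⟨fun P Q => ∃ p p' q q', Bisim p p' ∧ Bisim q q' ∧ P = p.par q ∧ Q = p'.par q',
    ⟨?_, ?_⟩, p, p', q, q', hp, hq, rfl, rfl⟩
  · rintro _ _ ⟨p, p', q, q', hp, hq, rfl, rfl⟩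
    exact ⟨p', p, q', q, hp.symm, hq.symm, rfl, rfl⟩
  · rintro _ _ ⟨p, p', q, q', hp, hq, rfl, rfl⟩ a _ hstep
    rcases step_par_iff.1 hstep with ⟨s, hs, rfl⟩ | ⟨s, hs, rfl⟩
    · obtain ⟨s', hs', hss'⟩ := hp.exists_step hs
      exact ⟨_, hs'.parL q', s, s', q, q', hss', hq, rfl, rfl⟩
    · obtain ⟨s', hs', hss'⟩ := hq.exists_step hs
      exact ⟨_, hs'.parR p', p, p', s, s', hp, hss', rfl, rfl⟩

theorem par_comm (p q : Proc A) : Bisim (p.par q) (q.par p) := by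
  refine ⟨fun P Q => ∃ p q : Proc A, P = p.par q ∧ Q = q.par p, ⟨?_, ?_⟩, p, q, rfl, rfl⟩
  · rintro _ _ ⟨p, q, rfl, rfl⟩
    exact ⟨q, p, rfl, rfl⟩
  · rintro _ _ ⟨p, q, rfl, rfl⟩ a _ hstep
    rcases step_par_iff.1 hstep with ⟨p', hp, rfl⟩ | ⟨q', hq, rfl⟩
    · exact ⟨_, hp.parR q, p', q, rfl, rfl⟩
    · exact ⟨_, hq.parL p, p, q', rfl, rfl⟩

theorem par_assoc (p q r : Proc A) : Bisim ((p.par q).par r) (p.par (q.par r)) := by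
  refine of_simulations
    (R := fun P Q => ∃ p q r : Proc A, P = (p.par q).par r ∧ Q = p.par (q.par r))
    ?_ ?_ ⟨p, q, r, rfl, rfl⟩
  · rintro _ _ ⟨p, q, r, rfl, rfl⟩ a _ hstep
    rcases step_par_iff.1 hstep with ⟨_, hpq, rfl⟩ | ⟨r', hr, rfl⟩
    · rcases step_par_iff.1 hpq with ⟨p', hp, rfl⟩ | ⟨q', hq, rfl⟩
      · exact ⟨_, hp.parL _, p', q, r, rfl, rfl⟩
      · exact ⟨_, (hq.parL r).parR p, p, q', r, rfl, rfl⟩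
    · exact ⟨_, (hr.parR q).parR p, p, q, r', rfl, rfl⟩
  · rintro _ _ ⟨p, q, r, rfl, rfl⟩ a _ hstep
    rcases step_par_iff.1 hstep with ⟨p', hp, rfl⟩ | ⟨_, hqr, rfl⟩
    · exact ⟨_, (hp.parL q).parL r, p', q, r, rfl, rfl⟩
    · rcases step_par_iff.1 hqr with ⟨q', hq, rfl⟩ | ⟨r', hr, rfl⟩
      · exact ⟨_, (hq.parR p).parL r, p, q', r, rfl, rfl⟩
      · exact ⟨_, hr.parR _, p, q, r', rfl, rfl⟩

theorem par_nil (p : Proc A) : Bisim (p.par nil) p := by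
  refine of_simulations (R := fun P q => P = q.par nil) ?_ ?_ rfl
  · rintro _ q rfl a _ hstep
    rcases step_par_iff.1 hstep with ⟨q', hq, rfl⟩ | ⟨_, hnil, -⟩
    · exact ⟨q', hq, rfl⟩
    · cases hnil
  · rintro _ q rfl a q' hq
    exact ⟨_, hq.parL nil, rfl⟩

theorem of_pre (h : Bisim (pre a p) (pre b q)) : a = b ∧ Bisim p q := by
  obtain ⟨q', ⟨⟩, hpq⟩ := h.exists_step Step.pre
  exact ⟨rfl, hpq⟩

end Bisim

/-- Bisimilarity as a `ParCon`. -/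
def bisimCon : ParCon A where
  r := Bisim
  iseqv := ⟨Bisim.refl, Bisim.symm, Bisim.trans⟩
  par := Bisim.par
  par_comm := Bisim.par_comm
  par_assoc := Bisim.par_assoc
  par_nil := Bisim.par_nil

/-- Bisimilarity classes of processes, a commutative monoid under parallel composition. -/
abbrev BisimClass (A : Type) : Type := (bisimCon : ParCon A).Class

local notation "⟪" p "⟫" => ParCon.classOf bisimCon p

theorem classOf_eq_iff_bisim : ⟪p⟫ = ⟪q⟫ ↔ Bisim p q :=
  ParCon.classOf_eq_iff

/-- The labelled transitions between bisimilarity classes induced by those of processes. -/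
def ClassStep (x : BisimClass A) (a : A) (y : BisimClass A) : Prop :=
  ∃ p q, ⟪p⟫ = x ∧ ⟪q⟫ = y ∧ Step p a q

variable {x y z x' y' : BisimClass A}

theorem classStep_classOf_iff : ClassStep ⟪p⟫ a y ↔ ∃ q, Step p a q ∧ ⟪q⟫ = y := by
  constructor
  · rintro ⟨p', q', hp, rfl, hstep⟩
    obtain ⟨q, hq, hbisim⟩ := (classOf_eq_iff_bisim.1 hp).exists_step hstep
    exact ⟨q, hq, classOf_eq_iff_bisim.2 hbisim.symm⟩
  · rintro ⟨q, hq, rfl⟩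
    exact ⟨p, q, rfl, rfl, hq⟩

theorem Step.classStep (h : Step p a q) : ClassStep ⟪p⟫ a ⟪q⟫ :=
  ⟨p, q, rfl, rfl, h⟩

theorem classStep_add_iff :
    ClassStep (x + y) a z ↔
      (∃ x', ClassStep x a x' ∧ z = x' + y) ∨ ∃ y', ClassStep y a y' ∧ z = x + y' := by
  obtain ⟨p, rfl⟩ := ParCon.classOf_surjective x
  obtain ⟨q, rfl⟩ := ParCon.classOf_surjective y
  simp only [← ParCon.classOf_par, classStep_classOf_iff, step_par_iff]
  constructor
  · rintro ⟨_, ⟨p', hp, rfl⟩ | ⟨q', hq, rfl⟩, rfl⟩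
    · exact Or.inl ⟨_, ⟨p', hp, rfl⟩, rfl⟩
    · exact Or.inr ⟨_, ⟨q', hq, rfl⟩, rfl⟩
  · rintro (⟨_, ⟨p', hp, rfl⟩, rfl⟩ | ⟨_, ⟨q', hq, rfl⟩, rfl⟩)
    · exact ⟨_, Or.inl ⟨p', hp, rfl⟩, rfl⟩
    · exact ⟨_, Or.inr ⟨q', hq, rfl⟩, rfl⟩

theorem ClassStep.add_right (h : ClassStep x a x') (y : BisimClass A) :
    ClassStep (x + y) a (x' + y) :=
  classStep_add_iff.2 (Or.inl ⟨x', h, rfl⟩)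

theorem ClassStep.add_left (h : ClassStep y a y') (x : BisimClass A) :
    ClassStep (x + y) a (x + y') :=
  classStep_add_iff.2 (Or.inr ⟨y', h, rfl⟩)

theorem not_classStep_zero : ¬ ClassStep 0 a y := by
  rw [← ParCon.classOf_nil, classStep_classOf_iff]
  rintro ⟨q, hq, -⟩
  cases hq

theorem classStep_pre_iff : ClassStep ⟪pre a p⟫ b y ↔ b = a ∧ y = ⟪p⟫ := by
  rw [classStep_classOf_iff]
  constructor
  · rintro ⟨q, ⟨⟩, rfl⟩
    exact ⟨rfl, rfl⟩
  · rintro ⟨rfl, rfl⟩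
    exact ⟨p, Step.pre, rfl⟩

theorem classStep_repl_iff : ClassStep ⟪repl a p⟫ b y ↔ b = a ∧ y = ⟪repl a p⟫ + ⟪p⟫ := by
  rw [classStep_classOf_iff]
  constructor
  · rintro ⟨q, ⟨⟩, rfl⟩
    exact ⟨rfl, rfl⟩
  · rintro ⟨rfl, rfl⟩
    exact ⟨_, Step.repl, rfl⟩

theorem eq_of_bisimulation {R : BisimClass A → BisimClass A → Prop}
    (hsymm : ∀ x y, R x y → R y x)
    (hR : ∀ x y, R x y → ∀ a x', ClassStep x a x' → ∃ y', ClassStep y a y' ∧ R x' y')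
    (hxy : R x y) : x = y := by
  obtain ⟨p, rfl⟩ := ParCon.classOf_surjective x
  obtain ⟨q, rfl⟩ := ParCon.classOf_surjective y
  refine classOf_eq_iff_bisim.2 ⟨fun p q => R ⟪p⟫ ⟪q⟫, ⟨fun p q => hsymm _ _, ?_⟩, hxy⟩
  intro p q hpq a p' hp
  obtain ⟨_, hstep, hpq'⟩ := hR _ _ hpq a _ hp.classStep
  obtain ⟨q', hq, rfl⟩ := classStep_classOf_iff.1 hstep
  exact ⟨q', hq, hpq'⟩

/-- Every step of `x` is matched by a step of `y`, up to equality or up to replacing `x` by `y` in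
the result: the one-sided proof obligation of a bisimulation up to parallel contexts. -/
def MatchesUpTo (x y : BisimClass A) : Prop :=
  ∀ a x', ClassStep x a x' →
    ∃ y', ClassStep y a y' ∧ (x' = y' ∨ ∃ z, x' = z + x ∧ y' = z + y)

theorem eq_of_matchesUpTo (hxy : MatchesUpTo x y) (hyx : MatchesUpTo y x) : x = y := by
  refine eq_of_bisimulation (R := fun u v => u = v ∨ ∃ x y z, MatchesUpTo x y ∧ MatchesUpTo y x ∧
    u = z + x ∧ v = z + y) ?_ ?_ (Or.inr ⟨x, y, 0, hxy, hyx, by simp, by simp⟩)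
  · rintro u v (rfl | ⟨x, y, z, hxy, hyx, rfl, rfl⟩)
    · exact Or.inl rfl
    · exact Or.inr ⟨y, x, z, hyx, hxy, rfl, rfl⟩
  · rintro u v (rfl | ⟨x, y, z, hxy, hyx, rfl, rfl⟩) a u' hu
    · exact ⟨u', hu, Or.inl rfl⟩
    rcases classStep_add_iff.1 hu with ⟨z', hz, rfl⟩ | ⟨x', hx, rfl⟩
    · exact ⟨_, hz.add_right y, Or.inr ⟨x, y, z', hxy, hyx, rfl, rfl⟩⟩
    obtain ⟨y', hy, rfl | ⟨z', rfl, rfl⟩⟩ := hxy a x' hx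
    · exact ⟨_, hy.add_left z, Or.inl rfl⟩
    · exact ⟨_, hy.add_left z, Or.inr ⟨x, y, z + z', hxy, hyx, by rw [add_assoc],
        by rw [add_assoc]⟩⟩

theorem eq_of_classStep_iff (h : ∀ a z, ClassStep x a z ↔ ClassStep y a z) : x = y :=
  eq_of_matchesUpTo (fun a z hz => ⟨z, (h a z).1 hz, Or.inl rfl⟩)
    fun a z hz => ⟨z, (h a z).2 hz, Or.inl rfl⟩

/-! ### Absorption -/

theorem finite_setOf_step (p : Proc A) (a : A) : {q | Step p a q}.Finite := by
  induction p with
  | nil => exact Set.Finite.subset Set.finite_empty fun q hq => by cases hq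
  | pre b p => exact Set.Finite.subset (Set.finite_singleton p) fun q hq => by cases hq; rfl
  | par p q ihp ihq =>
    refine ((ihp.image (Proc.par · q)).union (ihq.image (Proc.par p))).subset fun r hr => ?_
    rcases step_par_iff.1 hr with ⟨p', hp, rfl⟩ | ⟨q', hq, rfl⟩
    · exact Or.inl ⟨p', hp, rfl⟩
    · exact Or.inr ⟨q', hq, rfl⟩
  | repl b p => exact Set.Finite.subset (Set.finite_singleton _) fun q hq => by cases hq; rfl

theorem finite_setOf_classStep (x : BisimClass A) (a : A) : {y | ClassStep x a y}.Finite := by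
  obtain ⟨p, rfl⟩ := ParCon.classOf_surjective x
  refine ((finite_setOf_step p a).image bisimCon.classOf).subset fun y hy => ?_
  exact classStep_classOf_iff.1 hy

theorem ClassStep.exists_add_nsmul_eq {w : BisimClass A} (h : ClassStep x a y) (hw : x + w = x) :
    ∃ k > 0, y + k • w = y := by
  -- Adding `w` permutes the finite set of `a`-derivatives of `x`.
  have hmaps : Set.MapsTo (· + w) {y | ClassStep x a y} {y | ClassStep x a y} :=
    fun y hy => show ClassStep x a (y + w) from hw ▸ hy.add_right w
  have hsurj : Set.SurjOn (· + w) {y | ClassStep x a y} {y | ClassStep x a y} := by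
    intro y hy
    rcases classStep_add_iff.1 (hw.symm ▸ hy : ClassStep (x + w) a y) with
      ⟨x', hx', rfl⟩ | ⟨w', -, rfl⟩
    · exact ⟨x', hx', rfl⟩
    · exact ⟨x + w', hy, show x + w' + w = x + w' by rw [add_right_comm, hw]⟩
  have := (finite_setOf_classStep x a).to_subtype
  have hinj : Function.Injective hmaps.restrict :=
    Finite.injective_iff_surjective.2 (hmaps.restrict_surjective_iff.2 hsurj)
  obtain ⟨k, hk, hper⟩ := hinj.mem_periodicPts ⟨y, h⟩
  refine ⟨k, hk, ?_⟩
  have hiter := congrArg Subtype.val hper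
  rwa [hmaps.iterate_restrict, Set.MapsTo.val_restrict_apply, add_right_iterate] at hiter

theorem eq_of_eq_add_of_eq_add {q r : BisimClass A} (hyx : y = x + q) (hxy : x = y + r) :
    x = y := by
  refine eq_of_bisimulation (R := fun x y => ∃ q r, y = x + q ∧ x = y + r) ?_ ?_ ⟨q, r, hyx, hxy⟩
  · rintro x y ⟨q, r, hyx, hxy⟩
    exact ⟨r, q, hxy, hyx⟩
  · rintro x _ ⟨q, r, rfl, hxy⟩ a x' hx
    rw [add_assoc] at hxy
    obtain ⟨k, hk, hx'⟩ := hx.exists_add_nsmul_eq hxy.symm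
    obtain ⟨k, rfl⟩ := Nat.exists_eq_succ_of_ne_zero hk.ne'
    refine ⟨x' + q, hx.add_right q, q, r + k • (q + r), rfl, ?_⟩
    rw [succ_nsmul'] at hx'
    conv_lhs => rw [← hx']
    abel

theorem add_eq_self_of_add_add_eq_self {q r : BisimClass A} (h : x + (q + r) = x) : x + q = x :=
  (eq_of_eq_add_of_eq_add rfl (by rw [add_assoc, h])).symm

/-! ### Finite processes -/

theorem Proc.IsFin.step (hp : p.IsFin) (h : Step p a q) : q.IsFin ∧ p.size = q.size + 1 := by
  induction h with
  | pre => exact ⟨hp, rfl⟩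
  | repl => exact hp.elim
  | parL q _ ih =>
    obtain ⟨hfin, hsize⟩ := ih hp.1
    exact ⟨⟨hfin, hp.2⟩, by simp only [size]; lia⟩
  | parR p _ ih =>
    obtain ⟨hfin, hsize⟩ := ih hp.2
    exact ⟨⟨hp.1, hfin⟩, by simp only [size]; lia⟩

theorem Proc.IsFin.reps (hp : p.IsFin) (n : ℕ) : (reps n p).IsFin := by
  induction n with
  | zero => trivial
  | succ n ih => exact ⟨hp, ih⟩

theorem exists_step_of_size_ne_zero (hp : p.size ≠ 0) : ∃ a q, Step p a q := by
  induction p with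
  | nil => exact absurd rfl hp
  | pre a p => exact ⟨a, p, Step.pre⟩
  | par p q ihp ihq =>
    by_cases hp0 : p.size = 0
    · obtain ⟨a, q', hq⟩ := ihq fun hq0 => hp (by simp only [size]; lia)
      exact ⟨a, _, hq.parR p⟩
    · obtain ⟨a, p', hp'⟩ := ihp hp0
      exact ⟨a, _, hp'.parL q⟩
  | repl a p => exact ⟨a, _, Step.repl⟩

theorem Bisim.size_eq (h : Bisim p q) (hp : p.IsFin) (hq : q.IsFin) : p.size = q.size := by
  induction hn : p.size generalizing p q with
  | zero =>
    by_contra hq0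
    obtain ⟨a, q', hstep⟩ := exists_step_of_size_ne_zero (Ne.symm hq0)
    obtain ⟨p', hp', -⟩ := h.symm.exists_step hstep
    have hsize := (hp.step hp').2
    lia
  | succ n ih =>
    obtain ⟨a, p', hp'⟩ := exists_step_of_size_ne_zero (p := p) (by lia)
    obtain ⟨q', hq', h'⟩ := h.exists_step hp'
    obtain ⟨hpfin, hpsize⟩ := hp.step hp'
    obtain ⟨hqfin, hqsize⟩ := hq.step hq'
    rw [hqsize, ih h' hpfin hqfin (by lia)]

/-- The submonoid of bisimilarity classes of finite processes. -/
def finiteClasses (A : Type) : AddSubmonoid (BisimClass A) where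
  carrier := {x | ∃ F : Proc A, F.IsFin ∧ ⟪F⟫ = x}
  zero_mem' := ⟨nil, trivial, rfl⟩
  add_mem' := by
    rintro _ _ ⟨F, hF, rfl⟩ ⟨G, hG, rfl⟩
    exact ⟨F.par G, ⟨hF, hG⟩, rfl⟩

/-- The bisimilarity class of a finite process, as an element of `finiteClasses`. -/
def finClass (F : {F : Proc A // F.IsFin}) : finiteClasses A :=
  ⟨⟪F.1⟫, F.1, F.2, rfl⟩

theorem finClass_surjective : Function.Surjective (finClass (A := A)) := by
  rintro ⟨_, F, hF, rfl⟩
  exact ⟨⟨F, hF⟩, rfl⟩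

theorem finClass_eq_iff {F G : {F : Proc A // F.IsFin}} :
    finClass F = finClass G ↔ Bisim F.1 G.1 :=
  Subtype.ext_iff.trans classOf_eq_iff_bisim

theorem size_surjInv_finClass (F : {F : Proc A // F.IsFin}) :
    (Function.surjInv finClass_surjective (finClass F)).1.size = F.1.size :=
  (finClass_eq_iff.1 (Function.surjInv_eq finClass_surjective _)).size_eq
    (Function.surjInv finClass_surjective _).2 F.2

/-- The size of a finite process as a function of its bisimilarity class. -/
noncomputable def weight : finiteClasses A →+ ℕ where
  toFun x := (Function.surjInv finClass_surjective x).1.size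
  map_zero' := size_surjInv_finClass ⟨nil, trivial⟩
  map_add' x y := by
    obtain ⟨F, rfl⟩ := finClass_surjective x
    obtain ⟨G, rfl⟩ := finClass_surjective y
    rw [size_surjInv_finClass, size_surjInv_finClass]
    exact size_surjInv_finClass ⟨F.1.par G.1, F.2, G.2⟩

theorem weight_finClass (F : {F : Proc A // F.IsFin}) : weight (finClass F) = F.1.size :=
  size_surjInv_finClass F

theorem mem_finiteClasses_of_classStep (hx : x ∈ finiteClasses A) (h : ClassStep x a y) :
    y ∈ finiteClasses A := by
  obtain ⟨F, hF, rfl⟩ := hx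
  obtain ⟨G, hG, rfl⟩ := classStep_classOf_iff.1 h
  exact ⟨G, (hF.step hG).1, rfl⟩

/-- Transitions between classes of finite processes, with the label forgotten. -/
def FinStep (x y : finiteClasses A) : Prop :=
  ∃ a, ClassStep (x : BisimClass A) a y

theorem weight_eq_of_finStep {x y : finiteClasses A} (h : FinStep x y) :
    weight x = weight y + 1 := by
  obtain ⟨a, h⟩ := h
  obtain ⟨F, rfl⟩ := finClass_surjective x
  obtain ⟨G, hG, hy⟩ := classStep_classOf_iff.1 h
  obtain ⟨hfin, hsize⟩ := F.2.step hG
  obtain rfl : finClass ⟨G, hfin⟩ = y := Subtype.ext hy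
  rw [weight_finClass, weight_finClass, hsize]

theorem finStep_add_iff {x y z : finiteClasses A} :
    FinStep (x + y) z ↔
      (∃ x', FinStep x x' ∧ z = x' + y) ∨ ∃ y', FinStep y y' ∧ z = x + y' := by
  constructor
  · rintro ⟨a, h⟩
    rcases classStep_add_iff.1 h with ⟨x', hx', hz⟩ | ⟨y', hy', hz⟩
    · exact Or.inl ⟨⟨x', mem_finiteClasses_of_classStep x.2 hx'⟩, ⟨a, hx'⟩, Subtype.ext hz⟩
    · exact Or.inr ⟨⟨y', mem_finiteClasses_of_classStep y.2 hy'⟩, ⟨a, hy'⟩, Subtype.ext hz⟩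
  · rintro (⟨x', ⟨a, h⟩, rfl⟩ | ⟨y', ⟨a, h⟩, rfl⟩)
    · exact ⟨a, h.add_right _⟩
    · exact ⟨a, h.add_left _⟩

theorem isGradedStep_finStep : IsGradedStep (weight (A := A)) FinStep where
  eq_zero_of_weight_eq_zero {x} hx := by
    obtain ⟨F, rfl⟩ := finClass_surjective x
    rw [weight_finClass] at hx
    exact Subtype.ext (ParCon.classOf_eq_zero_of_size_eq_zero hx)
  weight_of_step := weight_eq_of_finStep
  step_add_iff := finStep_add_iff
  exists_step {x} hx := by
    obtain ⟨F, rfl⟩ := finClass_surjective x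
    obtain ⟨a, G, hG⟩ := exists_step_of_size_ne_zero (p := F.1) fun h0 =>
      hx (Subtype.ext (ParCon.classOf_eq_zero_of_size_eq_zero h0))
    exact ⟨finClass ⟨G, (F.2.step hG).1⟩, a, hG.classStep⟩

/-! ### Completeness of `≡D` for bisimilarity of finite processes -/

theorem exists_addIrreducible_pre (a : A) (F : {F : Proc A // F.IsFin}) :
    ∃ (k : ℕ) (G : {F : Proc A // F.IsFin}), AddIrreducible (finClass ⟨pre a G.1, G.2⟩) ∧
      ⟪pre a F.1⟫ = (k + 1) • ⟪pre a G.1⟫ ∧ ⟪F.1⟫ = ⟪G.1⟫ + k • ⟪pre a G.1⟫ := by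
  have hstep : ∀ y, FinStep (finClass ⟨pre a F.1, F.2⟩) y ↔ y = finClass F := fun y =>
    ⟨fun ⟨b, h⟩ => Subtype.ext (classStep_pre_iff.1 h).2,
      fun h => ⟨a, classStep_pre_iff.2 ⟨rfl, congrArg Subtype.val h⟩⟩⟩
  have hne : finClass ⟨pre a F.1, F.2⟩ ≠ 0 := fun h0 => by
    simpa [h0] using weight_eq_of_finStep ((hstep _).2 rfl)
  -- Since `a.F` has a single derivative, all its prime factors are equal to one `p`, which then has
  -- a single derivative too.
  obtain ⟨p, hp, k, hk⟩ := isGradedStep_finStep.exists_addIrreducible_eq_nsmul hne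
    fun y z hy hz => ((hstep y).1 hy).trans ((hstep z).1 hz).symm
  have hk_val : ⟪pre a F.1⟫ = (k + 1) • (p : BisimClass A) := congrArg Subtype.val hk
  have hstep_p : ∀ b y, ClassStep (p : BisimClass A) b y → b = a ∧ ⟪F.1⟫ = y + k • p := by
    intro b y hy
    have h := hy.add_right (k • (p : BisimClass A))
    rw [← succ_nsmul', ← hk_val, classStep_pre_iff] at h
    exact ⟨h.1, h.2.symm⟩
  obtain ⟨q, b, hq⟩ := isGradedStep_finStep.exists_step hp.ne_zero
  obtain ⟨G, rfl⟩ := finClass_surjective q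
  obtain ⟨rfl, hF⟩ := hstep_p b _ hq
  have hpG : (p : BisimClass A) = ⟪pre b G.1⟫ := by
    refine eq_of_classStep_iff fun c y => ⟨fun hy => classStep_pre_iff.2 ?_, fun hy => ?_⟩
    · obtain ⟨rfl, hFy⟩ := hstep_p c y hy
      refine ⟨rfl, congrArg Subtype.val (isGradedStep_finStep.add_right_cancel
        (x := ⟨y, mem_finiteClasses_of_classStep p.2 hy⟩) (y := finClass G) (z := k • p) ?_)⟩
      exact Subtype.ext (hFy.symm.trans hF)
    · obtain ⟨rfl, rfl⟩ := classStep_pre_iff.1 hy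
      exact hq
  obtain rfl : p = finClass ⟨pre b G.1, G.2⟩ := Subtype.ext hpG
  exact ⟨k, G, hp, hk_val, hF⟩

theorem exists_addIrreducible_components {n : ℕ}
    (ih : ∀ F G : Proc A, F.IsFin → G.IsFin → F.size < n → Bisim F G → EqD F G)
    (F : Proc A) (hF : F.IsFin) (hn : F.size ≤ n) :
    ∃ l : Multiset {F : Proc A // F.IsFin},
      (∀ C ∈ l, AddIrreducible (finClass C) ∧ ∃ a G, C.1 = pre a G) ∧
      (l.map finClass).sum = finClass ⟨F, hF⟩ ∧
      (l.map fun C => eqDCon.classOf C.1).sum = eqDCon.classOf F := by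
  induction F with
  | nil => exact ⟨0, by simp, rfl, rfl⟩
  | pre a F =>
    obtain ⟨k, G, hG, hpre, hFG⟩ := exists_addIrreducible_pre a ⟨F, hF⟩
    refine ⟨Multiset.replicate (k + 1) ⟨pre a G.1, G.2⟩, fun C hC => ?_, ?_, ?_⟩
    · rw [Multiset.eq_of_mem_replicate hC]
      exact ⟨hG, a, G.1, rfl⟩
    · rw [Multiset.map_replicate, Multiset.sum_replicate]
      exact Subtype.ext hpre.symm
    · have hF_eqD : EqD F (G.1.par (reps k (pre a G.1))) := by
        refine ih _ _ hF ⟨G.2, IsFin.reps (p := pre a G.1) G.2 k⟩ hn (classOf_eq_iff_bisim.1 ?_)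
        rw [hFG, ParCon.classOf_par, ParCon.classOf_reps]
      rw [Multiset.map_replicate, Multiset.sum_replicate, ← ParCon.classOf_reps]
      exact classOf_eq_iff_eqD.2 ((hF_eqD.congPre a).trans (EqD.distr a G.1 k G.2)).symm
  | par F G ihF ihG =>
    simp only [size] at hn
    obtain ⟨l, hl, hl_sum, hl_eqD⟩ := ihF hF.1 (by lia)
    obtain ⟨m, hm, hm_sum, hm_eqD⟩ := ihG hF.2 (by lia)
    refine ⟨l + m, fun C hC => (Multiset.mem_add.1 hC).elim (hl C) (hm C), ?_, ?_⟩
    · rw [Multiset.map_add, Multiset.sum_add, hl_sum, hm_sum]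
      rfl
    · rw [Multiset.map_add, Multiset.sum_add, hl_eqD, hm_eqD, ParCon.classOf_par]
  | repl a F => exact hF.elim

theorem map_eq_map_of_map_eq_map {α β γ : Type*} {f : α → β} {g : α → γ} {s t : Multiset α}
    (hf : s.map f = t.map f) (hfg : ∀ x ∈ s, ∀ y ∈ t, f x = f y → g x = g y) :
    s.map g = t.map g := by
  rw [← Multiset.rel_eq, Multiset.rel_map] at hf ⊢
  exact hf.mono hfg

theorem Bisim.eqD_of_isFin {F F' : Proc A} (h : Bisim F F') (hF : F.IsFin) (hF' : F'.IsFin) :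
    EqD F F' := by
  induction hn : F.size using Nat.strong_induction_on generalizing F F' with
  | _ n ih =>
    have ih' : ∀ G G' : Proc A, G.IsFin → G'.IsFin → G.size < n → Bisim G G' → EqD G G' :=
      fun G G' hG hG' hlt hbisim => ih _ hlt hbisim hG hG' rfl
    obtain ⟨l, hl, hl_sum, hl_eqD⟩ := exists_addIrreducible_components ih' F hF hn.le
    obtain ⟨m, hm, hm_sum, hm_eqD⟩ := exists_addIrreducible_components ih' F' hF'
      ((h.size_eq hF hF').symm.trans hn).le
    have hclasses : l.map finClass = m.map finClass := by
      refine isGradedStep_finStep.eq_of_sum_eq_sum ?_ ?_ ?_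
      · exact Multiset.forall_mem_map_iff.2 fun C hC => (hl C hC).1
      · exact Multiset.forall_mem_map_iff.2 fun C hC => (hm C hC).1
      · rw [hl_sum, hm_sum, finClass_eq_iff]
        exact h
    refine classOf_eq_iff_eqD.1 ?_
    rw [← hl_eqD, ← hm_eqD]
    refine congrArg Multiset.sum (map_eq_map_of_map_eq_map hclasses ?_)
    rintro ⟨C, hC⟩ hCl ⟨C', hC'⟩ hCm heq
    obtain ⟨-, a, G, rfl⟩ := hl _ hCl
    obtain ⟨-, a', G', rfl⟩ := hm _ hCm
    have hlt : G.size < n := by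
      have hle := IsGradedStep.weight_le_weight_sum weight (Multiset.mem_map_of_mem finClass hCl)
      rwa [hl_sum, weight_finClass, weight_finClass, hn] at hle
    obtain ⟨rfl, hGG'⟩ := (finClass_eq_iff.1 heq).of_pre
    exact classOf_eq_iff_eqD.2 ((ih' G G' hC hC' hlt hGG').congPre a)

/-! ### Finite and replicated parts -/

/-- The parallel product of the top-level components of a process that are not replicated. -/
def Proc.finitePart : Proc A → Proc A
  | nil => nil
  | pre a p => pre a p
  | par p q => par p.finitePart q.finitePart
  | repl _ _ => nil

/-- The pairs `(a, G)` for the top-level components `!a.G` of a process. -/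
def Proc.replicated : Proc A → Multiset (A × Proc A)
  | nil => 0
  | pre _ _ => 0
  | par p q => p.replicated + q.replicated
  | repl a p => {(a, p)}

/-- The size of `∏ !a.G`, over the pairs `(a, G)` in `s`. -/
def replSize (s : Multiset (A × Proc A)) : ℕ :=
  (s.map fun x => x.2.size + 1).sum

/-- The class of `∏ !a.G`, over the pairs `(a, G)` in `s`. -/
def ParCon.replSum (c : ParCon A) (s : Multiset (A × Proc A)) : c.Class :=
  (s.map fun x => c.classOf (repl x.1 x.2)).sum

local notation "⟪!" s "⟫" => ParCon.replSum bisimCon s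

variable {F F' G : Proc A} {s t : Multiset (A × Proc A)} {c d : BisimClass A}

theorem ParCon.replSum_cons (c : ParCon A) (x : A × Proc A) (s : Multiset (A × Proc A)) :
    c.replSum (x ::ₘ s) = c.classOf (repl x.1 x.2) + c.replSum s := by
  rw [replSum, Multiset.map_cons, Multiset.sum_cons, replSum]

theorem ParCon.classOf_eq_finitePart_add_replSum (c : ParCon A) (p : Proc A) :
    c.classOf p = c.classOf p.finitePart + c.replSum p.replicated := by
  induction p with
  | nil => exact (add_zero _).symm
  | pre a p => exact (add_zero _).symm
  | par p q ihp ihq =>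
    rw [classOf_par, ihp, ihq, finitePart, replicated, classOf_par, replSum, replSum, replSum,
      Multiset.map_add, Multiset.sum_add, add_add_add_comm]
  | repl a p => simp [finitePart, replicated, replSum, classOf_nil]

theorem replSize_cons (x : A × Proc A) (s : Multiset (A × Proc A)) :
    replSize (x ::ₘ s) = x.2.size + 1 + replSize s := by
  rw [replSize, Multiset.map_cons, Multiset.sum_cons, replSize]

theorem size_eq_size_finitePart_add_replSize (p : Proc A) :
    p.size = p.finitePart.size + replSize p.replicated := by
  induction p with
  | nil => rfl
  | pre a p => rfl
  | par p q ihp ihq =>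
    rw [size, ihp, ihq, finitePart, replicated, size, replSize, replSize, replSize,
      Multiset.map_add, Multiset.sum_add, add_add_add_comm]
  | repl a p => simp [finitePart, replicated, replSize, size]

theorem Proc.Wf.isFin_finitePart (hp : p.Wf) : p.finitePart.IsFin := by
  induction p with
  | nil => trivial
  | pre a p => exact hp
  | par p q ihp ihq => exact ⟨ihp hp.1, ihq hp.2⟩
  | repl a p => trivial

theorem Proc.Wf.isFin_of_mem_replicated (hp : p.Wf) : ∀ x ∈ p.replicated, x.2.IsFin := by
  induction p with
  | nil => simp [replicated]
  | pre a p => simp [replicated]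
  | par p q ihp ihq => exact fun x hx => (Multiset.mem_add.1 hx).elim (ihp hp.1 x) (ihq hp.2 x)
  | repl a p =>
    intro x hx
    rw [Multiset.mem_singleton.1 hx]
    exact hp

theorem Proc.IsFin.wf (hp : p.IsFin) : p.Wf := by
  induction p with
  | nil => trivial
  | pre a p => exact hp
  | par p q ihp ihq => exact ⟨ihp hp.1, ihq hp.2⟩
  | repl a p => exact hp.elim

theorem exists_wf_classOf_eq (hF : F.IsFin) (hs : ∀ x ∈ s, x.2.IsFin) :
    ∃ q : Proc A, q.Wf ∧ q.size = F.size + replSize s ∧ ⟪q⟫ = ⟪F⟫ + ⟪!s⟫ := by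
  induction s using Multiset.induction with
  | empty => exact ⟨F, hF.wf, rfl, (add_zero _).symm⟩
  | cons x s ih =>
    obtain ⟨hx, hs⟩ := Multiset.forall_mem_cons.1 hs
    obtain ⟨q, hq, hsize, hclass⟩ := ih hs
    refine ⟨(repl x.1 x.2).par q, ⟨hx, hq⟩, ?_, ?_⟩
    · rw [replSize_cons, size, size, hsize]
      lia
    · rw [ParCon.classOf_par, hclass, ParCon.replSum_cons, add_left_comm]

theorem IsSeed.size_add_replSize_le (hp : IsSeed p) (hF : F.IsFin) (hs : ∀ x ∈ s, x.2.IsFin)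
    (h : ⟪F⟫ + ⟪!s⟫ = ⟪p.finitePart⟫ + ⟪!p.replicated⟫) :
    p.finitePart.size + replSize p.replicated ≤ F.size + replSize s := by
  obtain ⟨q, hq, hsize, hclass⟩ := exists_wf_classOf_eq hF hs
  rw [h, ← ParCon.classOf_eq_finitePart_add_replSum, classOf_eq_iff_bisim] at hclass
  rw [← hsize, ← size_eq_size_finitePart_add_replSize]
  exact hp.2 q hq hclass

theorem classStep_replSum_iff :
    ClassStep ⟪!s⟫ a y ↔ ∃ x ∈ s, a = x.1 ∧ y = ⟪x.2⟫ + ⟪!s⟫ := by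
  induction s using Multiset.induction generalizing y with
  | empty => exact ⟨fun h => absurd h not_classStep_zero, by rintro ⟨x, hx, -⟩; simp at hx⟩
  | cons z s ih =>
    rw [ParCon.replSum_cons, classStep_add_iff]
    constructor
    · rintro (⟨_, hz, rfl⟩ | ⟨_, hs, rfl⟩)
      · obtain ⟨rfl, rfl⟩ := classStep_repl_iff.1 hz
        exact ⟨z, Multiset.mem_cons_self z s, rfl, by abel⟩
      · obtain ⟨x, hx, rfl, rfl⟩ := ih.1 hs
        exact ⟨x, Multiset.mem_cons_of_mem hx, rfl, by abel⟩
    · rintro ⟨x, hx, rfl, rfl⟩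
      rcases Multiset.mem_cons.1 hx with rfl | hx
      · exact Or.inl ⟨_, classStep_repl_iff.2 ⟨rfl, rfl⟩, by abel⟩
      · exact Or.inr ⟨_, ih.2 ⟨x, hx, rfl, rfl⟩, by abel⟩

theorem replSum_eq_replSum
    (hst : ∀ x ∈ s, ∃ y ∈ t, x.1 = y.1 ∧ ⟪x.2⟫ + ⟪!s⟫ = ⟪y.2⟫ + ⟪!s⟫)
    (hts : ∀ y ∈ t, ∃ x ∈ s, x.1 = y.1 ∧ ⟪x.2⟫ + ⟪!s⟫ = ⟪y.2⟫ + ⟪!s⟫) : ⟪!s⟫ = ⟪!t⟫ := by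
  refine eq_of_matchesUpTo (fun a x' hx' => ?_) fun a y' hy' => ?_
  · obtain ⟨x, hx, rfl, rfl⟩ := classStep_replSum_iff.1 hx'
    obtain ⟨y, hy, hlabel, hbody⟩ := hst x hx
    exact ⟨_, classStep_replSum_iff.2 ⟨y, hy, hlabel, rfl⟩, Or.inr ⟨⟪y.2⟫, hbody, rfl⟩⟩
  · obtain ⟨y, hy, rfl, rfl⟩ := classStep_replSum_iff.1 hy'
    obtain ⟨x, hx, hlabel, hbody⟩ := hts y hy
    exact ⟨_, classStep_replSum_iff.2 ⟨x, hx, hlabel.symm, rfl⟩, Or.inr ⟨⟪y.2⟫, rfl, hbody⟩⟩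

theorem replSum_cons_congr
    (h : ⟪F⟫ + ⟪!(a, F) ::ₘ s⟫ = ⟪G⟫ + ⟪!(a, F) ::ₘ s⟫) :
    ⟪!(a, F) ::ₘ s⟫ = ⟪!(a, G) ::ₘ s⟫ :=
  replSum_eq_replSum
    (Multiset.forall_mem_cons.2 ⟨⟨_, Multiset.mem_cons_self _ _, rfl, h⟩,
      fun x hx => ⟨x, Multiset.mem_cons_of_mem hx, rfl, rfl⟩⟩)
    (Multiset.forall_mem_cons.2 ⟨⟨_, Multiset.mem_cons_self _ _, rfl, h⟩,
      fun x hx => ⟨x, Multiset.mem_cons_of_mem hx, rfl, rfl⟩⟩)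

theorem replSum_cons_cons_of_eq {u v : A × Proc A} (hlabel : u.1 = v.1) (hbody : ⟪u.2⟫ = ⟪v.2⟫) :
    ⟪!u ::ₘ v ::ₘ s⟫ = ⟪!v ::ₘ s⟫ :=
  replSum_eq_replSum
    (Multiset.forall_mem_cons.2 ⟨⟨v, Multiset.mem_cons_self _ _, hlabel, by rw [hbody]⟩,
      fun x hx => ⟨x, hx, rfl, rfl⟩⟩)
    fun x hx => ⟨x, Multiset.mem_cons_of_mem hx, rfl, rfl⟩

/-- A class which remains a summand of all its derivatives, as do the classes of products of
replicated processes. -/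
def Persistent (d : BisimClass A) : Prop :=
  ∀ a d', ClassStep d a d' → ∃ w, d' = w + d

theorem persistent_replSum (s : Multiset (A × Proc A)) : Persistent ⟪!s⟫ := by
  intro a d' h
  obtain ⟨x, -, -, rfl⟩ := classStep_replSum_iff.1 h
  exact ⟨⟪x.2⟫, rfl⟩

theorem Persistent.exists_eq_add_of_classStep (hd : Persistent d) (h : ClassStep (x + d) a y) :
    ∃ w, y = w + d := by
  rcases classStep_add_iff.1 h with ⟨x', -, rfl⟩ | ⟨d', hd', rfl⟩
  · exact ⟨x', rfl⟩
  · obtain ⟨w, rfl⟩ := hd a d' hd'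
    exact ⟨x + w, (add_assoc x w d).symm⟩

theorem Persistent.exists_eq_add_of_isFin (hd : Persistent d) (hF : F.IsFin)
    (h : ⟪F⟫ + c = x + d) : ∃ w, c = w + d := by
  induction hn : F.size generalizing F x with
  | zero => exact ⟨x, by rw [← h, ParCon.classOf_eq_zero_of_size_eq_zero hn, zero_add]⟩
  | succ n ih =>
    obtain ⟨a, F', hstep⟩ := exists_step_of_size_ne_zero (p := F) (by lia)
    obtain ⟨hF', hsize⟩ := hF.step hstep
    obtain ⟨w, hw⟩ := hd.exists_eq_add_of_classStep (h ▸ hstep.classStep.add_right c)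
    exact ih hF' hw (by lia)

theorem replSum_eq_of_isFin_add_eq (hF : F.IsFin) (hF' : F'.IsFin)
    (h : ⟪F⟫ + ⟪!s⟫ = ⟪F'⟫ + ⟪!t⟫) : ⟪!s⟫ = ⟪!t⟫ := by
  obtain ⟨w, hw⟩ := (persistent_replSum t).exists_eq_add_of_isFin hF h
  obtain ⟨v, hv⟩ := (persistent_replSum s).exists_eq_add_of_isFin hF' h.symm
  exact eq_of_eq_add_of_eq_add (hv.trans (add_comm _ _)) (hw.trans (add_comm _ _))

theorem Bisim.replSum_replicated_eq (h : Bisim p q) (hp : p.Wf) (hq : q.Wf) :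
    ⟪!p.replicated⟫ = ⟪!q.replicated⟫ := by
  refine replSum_eq_of_isFin_add_eq hp.isFin_finitePart hq.isFin_finitePart ?_
  rw [← ParCon.classOf_eq_finitePart_add_replSum, ← ParCon.classOf_eq_finitePart_add_replSum,
    classOf_eq_iff_bisim]
  exact h

/-! ### Absorption-free processes -/

/-- A finite process none of whose subterms `a.G` is absorbed by the class `c`. -/
def AbsorptionFree (c : BisimClass A) : Proc A → Prop
  | nil => True
  | pre a p => ⟪pre a p⟫ + c ≠ c ∧ AbsorptionFree c p
  | par p q => AbsorptionFree c p ∧ AbsorptionFree c q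
  | repl _ _ => False

theorem AbsorptionFree.isFin (h : AbsorptionFree c p) : p.IsFin := by
  induction p with
  | nil => trivial
  | pre a p ih => exact ih h.2
  | par p q ihp ihq => exact ⟨ihp h.1, ihq h.2⟩
  | repl a p => exact h.elim

theorem AbsorptionFree.step (h : AbsorptionFree c p) (hstep : Step p a q) :
    AbsorptionFree c q := by
  induction hstep with
  | pre => exact h.2
  | repl => exact h.elim
  | parL q _ ih => exact ⟨ih h.1, h.2⟩
  | parR p _ ih => exact ⟨h.1, ih h.2⟩

theorem AbsorptionFree.size_eq_zero (h : AbsorptionFree c p) (hc : ⟪p⟫ + c = c) :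
    p.size = 0 := by
  induction p with
  | nil => rfl
  | pre a p => exact absurd hc h.1
  | par p q ihp ihq =>
    rw [ParCon.classOf_par, add_comm] at hc
    have hp := add_eq_self_of_add_add_eq_self hc
    have hq := add_eq_self_of_add_add_eq_self (add_comm ⟪p⟫ ⟪q⟫ ▸ hc)
    rw [size, ihp h.1 (by rw [add_comm, hp]), ihq h.2 (by rw [add_comm, hq])]
  | repl a p => exact h.elim

theorem Persistent.matchesUpTo_pre (hc : Persistent c) (h : ⟪p⟫ + c = ⟪q⟫ + c) :
    MatchesUpTo (⟪pre a p⟫ + c) (⟪pre a q⟫ + c) := by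
  intro b _ hstep
  rcases classStep_add_iff.1 hstep with ⟨_, hp, rfl⟩ | ⟨c', hc', rfl⟩
  · obtain ⟨rfl, rfl⟩ := classStep_pre_iff.1 hp
    exact ⟨_, (classStep_pre_iff.2 ⟨rfl, rfl⟩).add_right c, Or.inl h⟩
  · obtain ⟨w, rfl⟩ := hc b c' hc'
    exact ⟨_, hc'.add_left _, Or.inr ⟨w, by abel, by abel⟩⟩

theorem Persistent.pre_add_congr (hc : Persistent c) (a : A) (h : ⟪p⟫ + c = ⟪q⟫ + c) :
    ⟪pre a p⟫ + c = ⟪pre a q⟫ + c :=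
  eq_of_matchesUpTo (hc.matchesUpTo_pre h) (hc.matchesUpTo_pre h.symm)

theorem Persistent.exists_size_lt (hc : Persistent c) (hF : F.IsFin)
    (h : ¬ AbsorptionFree c F) :
    ∃ G : Proc A, G.IsFin ∧ G.size < F.size ∧ ⟪G⟫ + c = ⟪F⟫ + c := by
  induction F with
  | nil => exact absurd trivial h
  | pre a F ih =>
    by_cases habs : ⟪pre a F⟫ + c = c
    · exact ⟨nil, trivial, Nat.succ_pos _, by rw [habs, ParCon.classOf_nil, zero_add]⟩
    · obtain ⟨G, hG, hlt, heq⟩ := ih hF fun hfree => h ⟨habs, hfree⟩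
      exact ⟨pre a G, hG, Nat.succ_lt_succ hlt, hc.pre_add_congr a heq⟩
  | par F F' ihF ihF' =>
    by_cases hfree : AbsorptionFree c F
    · obtain ⟨G, hG, hlt, heq⟩ := ihF' hF.2 fun hfree' => h ⟨hfree, hfree'⟩
      refine ⟨F.par G, ⟨hF.1, hG⟩, Nat.add_lt_add_left hlt _, ?_⟩
      rw [ParCon.classOf_par, ParCon.classOf_par, add_assoc, heq, add_assoc]
    · obtain ⟨G, hG, hlt, heq⟩ := ihF hF.1 hfree
      refine ⟨G.par F', ⟨hG, hF.2⟩, Nat.add_lt_add_right hlt _, ?_⟩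
      rw [ParCon.classOf_par, ParCon.classOf_par, add_right_comm, heq, add_right_comm]
  | repl a F => exact hF.elim

theorem AbsorptionFree.size_le (hs : ∀ x ∈ s, AbsorptionFree ⟪!s⟫ x.2)
    (hF : AbsorptionFree ⟪!s⟫ F) (hG : G.IsFin) (h : ⟪F⟫ + ⟪!s⟫ = ⟪G⟫ + ⟪!s⟫) :
    F.size ≤ G.size := by
  induction hn : G.size generalizing F G with
  | zero =>
    rw [ParCon.classOf_eq_zero_of_size_eq_zero hn, zero_add] at h
    exact (hF.size_eq_zero h).le
  | succ n ih =>
    obtain ⟨a, G', hstep⟩ := exists_step_of_size_ne_zero (p := G) (by lia)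
    obtain ⟨hG', hsize⟩ := hG.step hstep
    rcases classStep_add_iff.1 (h ▸ hstep.classStep.add_right ⟪!s⟫) with
      ⟨_, hFstep, heq⟩ | ⟨_, hs', heq⟩
    · obtain ⟨F', hF', rfl⟩ := classStep_classOf_iff.1 hFstep
      have hle := ih (hF.step hF') hG' heq.symm (by lia)
      have hsize' := (hF.isFin.step hF').2
      lia
    · obtain ⟨x, hx, -, rfl⟩ := classStep_replSum_iff.1 hs'
      rw [← add_assoc, ← ParCon.classOf_par] at heq
      have hle := ih (F := F.par x.2) ⟨hF, hs x hx⟩ hG' heq.symm (by lia)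
      exact (Nat.le_add_right _ _).trans (hle.trans n.le_succ)

theorem AbsorptionFree.bisim_of_add_replSum_eq (hs : ∀ x ∈ s, AbsorptionFree ⟪!s⟫ x.2)
    (hF : AbsorptionFree ⟪!s⟫ F) (hG : AbsorptionFree ⟪!s⟫ G)
    (h : ⟪F⟫ + ⟪!s⟫ = ⟪G⟫ + ⟪!s⟫) : Bisim F G := by
  refine ⟨fun F G => AbsorptionFree ⟪!s⟫ F ∧ AbsorptionFree ⟪!s⟫ G ∧
    ⟪F⟫ + ⟪!s⟫ = ⟪G⟫ + ⟪!s⟫, ⟨fun F G h => ⟨h.2.1, h.1, h.2.2.symm⟩, ?_⟩, hF, hG, h⟩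
  rintro F G ⟨hF, hG, h⟩ a F' hstep
  rcases classStep_add_iff.1 (h ▸ hstep.classStep.add_right ⟪!s⟫) with
    ⟨_, hGstep, heq⟩ | ⟨_, hs', heq⟩
  · obtain ⟨G', hG', rfl⟩ := classStep_classOf_iff.1 hGstep
    exact ⟨G', hG', hF.step hstep, hG.step hG', heq⟩
  -- A step of `F` cannot be matched by the replicated part: the result would be larger than `F'`.
  · obtain ⟨x, hx, -, rfl⟩ := classStep_replSum_iff.1 hs'
    rw [← add_assoc, ← ParCon.classOf_par] at heq
    have hle := size_le (F := G.par x.2) hs ⟨hG, hs x hx⟩ (hF.step hstep).isFin heq.symm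
    have hFG := hF.size_le hs hG.isFin h
    have hsize := (hF.isFin.step hstep).2
    simp only [size] at hle
    lia

/-! ### Seeds -/

namespace IsSeed

theorem absorptionFree_finitePart (hp : IsSeed p) :
    AbsorptionFree ⟪!p.replicated⟫ p.finitePart := by
  by_contra hfree
  obtain ⟨G, hG, hlt, heq⟩ :=
    (persistent_replSum _).exists_size_lt hp.1.isFin_finitePart hfree
  have hle := hp.size_add_replSize_le hG hp.1.isFin_of_mem_replicated heq
  lia

theorem absorptionFree_of_mem_replicated (hp : IsSeed p) :
    ∀ x ∈ p.replicated, AbsorptionFree ⟪!p.replicated⟫ x.2 := by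
  rintro ⟨a, F⟩ hF
  by_contra hfree
  have hfin := hp.1.isFin_of_mem_replicated
  obtain ⟨G, hG, hlt, heq⟩ := (persistent_replSum _).exists_size_lt (hfin _ hF) hfree
  obtain ⟨s, hs⟩ := Multiset.exists_cons_of_mem hF
  rw [hs] at heq hfin
  have hle := hp.size_add_replSize_le (s := (a, G) ::ₘ s) hp.1.isFin_finitePart
    (Multiset.forall_mem_cons.2 ⟨hG, (Multiset.forall_mem_cons.1 hfin).2⟩)
    (by rw [hs, replSum_cons_congr heq.symm])
  rw [hs, replSize_cons, replSize_cons] at hle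
  lia

theorem nodup_replicated_classes (hp : IsSeed p) :
    (p.replicated.map fun x => (x.1, ⟪x.2⟫)).Nodup := by
  classical
  rw [Multiset.nodup_iff_ne_cons_cons]
  intro z m hm
  obtain ⟨u, hu, hfu, hm'⟩ := (Multiset.map_eq_cons _ _ _ _).2 hm
  obtain ⟨v, hv, hfv, -⟩ := (Multiset.map_eq_cons _ _ _ _).2 hm'
  obtain ⟨s, hs⟩ := Multiset.exists_cons_of_mem hv
  have hrepl : p.replicated = u ::ₘ v ::ₘ s := by rw [← hs, Multiset.cons_erase hu]
  obtain ⟨hlabel, hbody⟩ := Prod.mk.inj (hfu.trans hfv.symm)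
  have hle := hp.size_add_replSize_le (s := v ::ₘ s) hp.1.isFin_finitePart
    (fun x hx => hp.1.isFin_of_mem_replicated x (hrepl ▸ Multiset.mem_cons_of_mem hx))
    (by rw [hrepl, replSum_cons_cons_of_eq hlabel hbody])
  rw [hrepl, replSize_cons] at hle
  lia

theorem map_replicated_subset (hp : IsSeed p) (hq : IsSeed q)
    (h : ⟪!p.replicated⟫ = ⟪!q.replicated⟫) :
    (p.replicated.map fun x => (x.1, ⟪x.2⟫)) ⊆ q.replicated.map fun x => (x.1, ⟪x.2⟫) := by
  intro u hu
  obtain ⟨x, hx, rfl⟩ := Multiset.mem_map.1 hu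
  obtain ⟨y, hy, hlabel, hbody⟩ := classStep_replSum_iff.1
    (h ▸ classStep_replSum_iff.2 ⟨x, hx, rfl, rfl⟩)
  have hy_free := hq.absorptionFree_of_mem_replicated y hy
  rw [← h] at hbody hy_free
  have hbisim := AbsorptionFree.bisim_of_add_replSum_eq hp.absorptionFree_of_mem_replicated
    (hp.absorptionFree_of_mem_replicated x hx) hy_free hbody
  exact Multiset.mem_map.2 ⟨y, hy, by rw [hlabel, classOf_eq_iff_bisim.2 hbisim]⟩

theorem map_replicated_eq (hp : IsSeed p) (hq : IsSeed q)
    (h : ⟪!p.replicated⟫ = ⟪!q.replicated⟫) :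
    (p.replicated.map fun x => (x.1, ⟪x.2⟫)) = q.replicated.map fun x => (x.1, ⟪x.2⟫) :=
  (Multiset.Nodup.ext hp.nodup_replicated_classes hq.nodup_replicated_classes).2 fun _ =>
    ⟨fun hu => hp.map_replicated_subset hq h hu,
      fun hu => hq.map_replicated_subset hp h.symm hu⟩

theorem eqDCon_replSum_replicated_eq (hp : IsSeed p) (hq : IsSeed q) (h : Bisim p q) :
    eqDCon.replSum p.replicated = eqDCon.replSum q.replicated := by
  have hmap := hp.map_replicated_eq hq (h.replSum_replicated_eq hp.1 hq.1)
  refine congrArg Multiset.sum (map_eq_map_of_map_eq_map hmap ?_)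
  rintro ⟨a, F⟩ hF ⟨b, G⟩ hG heq
  obtain ⟨rfl, hFG⟩ := Prod.mk.inj heq
  have hbody : EqD F G := (classOf_eq_iff_bisim.1 hFG).eqD_of_isFin
    (hp.1.isFin_of_mem_replicated _ hF) (hq.1.isFin_of_mem_replicated _ hG)
  exact classOf_eq_iff_eqD.2 (hbody.congRepl a)

theorem eqD_finitePart (hp : IsSeed p) (hq : IsSeed q) (h : Bisim p q) :
    EqD p.finitePart q.finitePart := by
  have hrepl := h.replSum_replicated_eq hp.1 hq.1
  have hq_free := hq.absorptionFree_finitePart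
  have hclass := classOf_eq_iff_bisim.2 h
  rw [ParCon.classOf_eq_finitePart_add_replSum, ParCon.classOf_eq_finitePart_add_replSum _ q,
    ← hrepl] at hclass
  rw [← hrepl] at hq_free
  have hbisim : Bisim p.finitePart q.finitePart :=
    AbsorptionFree.bisim_of_add_replSum_eq hp.absorptionFree_of_mem_replicated
      hp.absorptionFree_finitePart hq_free hclass
  exact hbisim.eqD_of_isFin hp.1.isFin_finitePart hq.1.isFin_finitePart

end IsSeed
end CCS

theorem seeds_unique_general {A : Type} {P P' : CCS.Proc A} (hP : CCS.IsSeed P)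
    (hP' : CCS.IsSeed P') (h : CCS.Bisim P P') : CCS.EqD P P' := by
  have hfinite := CCS.classOf_eq_iff_eqD.2 (hP.eqD_finitePart hP' h)
  have hreplicated := hP.eqDCon_replSum_replicated_eq hP' h
  rw [← CCS.classOf_eq_iff_eqD, CCS.ParCon.classOf_eq_finitePart_add_replSum _ P, hfinite,
    hreplicated, ← CCS.ParCon.classOf_eq_finitePart_add_replSum]

/-- Uniqueness of seeds: if `P ~ P'` and both are seeds, then `P ≡D P'`. -/
theorem seeds_unique {A : Type} [Countable A]
    (P P' : CCS.Proc A) (hP : CCS.IsSeed P) (hP' : CCS.IsSeed P')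
    (h : CCS.Bisim P P') :
    CCS.EqD P P' :=
  seeds_unique_general hP hP' h
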